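/- There is an absolute constant c > 0 such that the following holds. Let v, u ∈ {±1}^d with m := #{i : vᵢ = uᵢ} satisfying |d/2 − m| ≤ d/4, let ε ∈ (0,1), and choose the integer threshold t so that E[f_v(x)] = ε. Then Σ_{k = ⌈c·log(d/ε)⌉}^{d − ⌈c·log(d/ε)⌉} R_k ≤ ε²/d. -/

import Mathlib

/-- The ±1 value of a hypercube coordinate encoded by a boolean. -/
def sgnB (b : Bool) : ℤ := if b then 1 else -1

/-- Inner product `v·x` of two vertices of the hypercube `{±1}^d`. -/
def dotB {d : ℕ} (v x : Fin d → Bool) : ℤ := ∑ i, sgnB (v i) * sgnB (x i)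

/-- `f_v(x) = 1{v·x ≥ 2t − d}`, real valued. -/
noncomputable def fv {d : ℕ} (t : ℕ) (v x : Fin d → Bool) : ℝ :=
  if 2 * (t : ℤ) - d ≤ dotB v x then 1 else 0

/-- `E[f_v(x)]` over `x` uniform on the hypercube. -/
noncomputable def Efv (d t : ℕ) (v : Fin d → Bool) : ℝ := (∑ x, fv t v x) / 2 ^ d

/-- The normalized Kravchuk polynomial
`K(n, a, b) = (1/(C(n,a)·C(n,b))) · Σ_{A,B ⊆ [n], |A|=a, |B|=b} (−1)^{|A ∩ B|}`. -/
noncomputable def krav (n a b : ℕ) : ℝ :=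
  (∑ A ∈ Finset.powersetCard a (Finset.univ : Finset (Fin n)),
      ∑ B ∈ Finset.powersetCard b (Finset.univ : Finset (Fin n)),
        (-1 : ℝ) ^ (A ∩ B).card) /
    ((n.choose a) * (n.choose b))

/-- `R_k := C(d,k) · (2^{−d}·Σ_{s=t}^{d} C(d,s)·K(d,k,s))² · K(d,m,k)`. -/
noncomputable def Rk (d t m k : ℕ) : ℝ :=
  (d.choose k : ℝ) *
    ((1 / 2 ^ d) * ∑ s ∈ Finset.Icc t d, (d.choose s : ℝ) * krav d k s) ^ 2 *
      krav d m k

/-!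
By Parseval the squared Fourier weights of `f_v` over all levels sum to `E[f_v²] = ε`, so it
suffices that `|K(d, m, k)| ≤ ε / d` on the middle levels. Now `C(d, k) K(d, m, k)` is the
coefficient of `X ^ k` in `(1 - X) ^ m (1 + X) ^ (d - m)`, which we bound by Cauchy's estimate on
the circle of radius `k / (d - k)`, the saddle point for `(1 + X) ^ d`. The trivial bound would
return `C(d, k)` up to the factor `d + 1`, because `k` is the mode of the binomial distribution with
parameters `d` and `k / d`. At least `d / 4` factors `1 - X` can be paired with as many factors
`1 + X`, however, and each pair `1 - X ^ 2` gains a factor `exp (-2 k (d - k) / d ^ 2)`: altogether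
the bound is exponentially small in `min k (d - k)`. The radius is homogenized to `k : d - k`, which
avoids dividing by zero.
-/

open Finset

section Walsh

variable {ι : Type*} [DecidableEq ι]

/-- The Walsh character `χ_A(B) = (-1)^|A ∩ B|` of the hypercube, whose vertices are encoded as
the subsets `B` of the coordinate set. -/
def walsh (A B : Finset ι) : ℝ := (-1) ^ #(A ∩ B)

lemma walsh_comm (A B : Finset ι) : walsh A B = walsh B A := by
  rw [walsh, walsh, inter_comm]

lemma walsh_eq_prod (A B : Finset ι) : walsh A B = ∏ i ∈ B, if i ∈ A then (-1 : ℝ) else 1 := by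
  rw [walsh, prod_ite, prod_const, prod_const_one, mul_one, filter_mem_eq_inter, inter_comm]

variable [Fintype ι]

lemma sum_walsh_mul_walsh (B C : Finset ι) :
    ∑ A, walsh A B * walsh A C = if B = C then 2 ^ Fintype.card ι else 0 := by
  have sum_eq_prod : ∑ A, walsh A B * walsh A C =
      ∏ i, (1 + (if i ∈ B then (-1 : ℝ) else 1) * if i ∈ C then (-1 : ℝ) else 1) := by
    simp_rw [walsh_comm _ B, walsh_comm _ C, walsh_eq_prod, ← prod_mul_distrib, prod_one_add,
      powerset_univ]
  rw [sum_eq_prod]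
  split_ifs with h
  · subst h
    rw [← card_univ, ← prod_const]
    refine prod_congr rfl fun i _ => ?_
    split_ifs <;> norm_num
  · obtain ⟨i, hi⟩ : ∃ i, ¬(i ∈ B ↔ i ∈ C) := by simpa [Finset.ext_iff] using h
    refine prod_eq_zero (mem_univ i) ?_
    by_cases hB : i ∈ B <;> by_cases hC : i ∈ C <;> simp_all

/-- The Walsh–Fourier transform of a function on the hypercube, without the normalizing factor
`2 ^ (-|ι|)`. -/
def walshTransform (f : Finset ι → ℝ) (A : Finset ι) : ℝ := ∑ B, f B * walsh A B

lemma sum_walshTransform_sq (f : Finset ι → ℝ) :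
    ∑ A, walshTransform f A ^ 2 = 2 ^ Fintype.card ι * ∑ B, f B ^ 2 := by
  calc ∑ A, walshTransform f A ^ 2
      = ∑ B, ∑ C, f B * f C * ∑ A, walsh A B * walsh A C := by
        simp_rw [walshTransform, sq, sum_mul_sum, mul_sum]
        rw [sum_comm]
        refine sum_congr rfl fun B _ => ?_
        rw [sum_comm]
        exact sum_congr rfl fun C _ => sum_congr rfl fun A _ => by ring
    _ = 2 ^ Fintype.card ι * ∑ B, f B ^ 2 := by
        simp only [sum_walsh_mul_walsh, mul_ite, mul_zero, sum_ite_eq, mem_univ, if_true, mul_sum]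
        exact sum_congr rfl fun B _ => by ring

end Walsh

section GeneratingFunction

open Polynomial

variable {ι : Type*} [DecidableEq ι] [Fintype ι]

lemma coeff_sub_pow_mul_add_pow (A : Finset ι) (x y : ℝ) (k : ℕ) :
    ((C y - C x * X) ^ #A * (C y + C x * X) ^ (Fintype.card ι - #A)).coeff k =
      (∑ B ∈ powersetCard k univ, walsh A B) * (x ^ k * y ^ (Fintype.card ι - k)) := by
  have prod_eq : (C y - C x * X) ^ #A * (C y + C x * X) ^ (Fintype.card ι - #A) =
      ∏ i, (C (if i ∈ A then (-1 : ℝ) else 1) * (C x * X) + C y) := by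
    rw [← card_compl, ← prod_const, ← prod_const, ← prod_mul_prod_compl A]
    congr 1 <;> refine prod_congr rfl fun i hi => ?_
    · simp only [hi, if_true, map_neg, map_one]
      ring
    · simp only [mem_compl.1 hi, if_false, map_one]
      ring
  have summand_eq (B : Finset ι) :
      (∏ i ∈ B, C (if i ∈ A then (-1 : ℝ) else 1) * (C x * X)) * ∏ _i ∈ Bᶜ, C y =
        C (walsh A B * (x ^ #B * y ^ (Fintype.card ι - #B))) * X ^ #B := by
    rw [prod_mul_distrib, ← map_prod, ← walsh_eq_prod, prod_const, prod_const, card_compl]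
    simp only [map_mul, map_pow]
    ring
  rw [prod_eq, Fintype.prod_add, finsetSum_coeff, sum_mul, powersetCard_eq_filter, powerset_univ,
    sum_filter]
  refine sum_congr rfl fun B _ => ?_
  rw [summand_eq, coeff_C_mul_X_pow]
  split_ifs <;> simp_all

lemma sum_walsh_congr {A A' : Finset ι} (h : #A = #A') (k : ℕ) :
    ∑ B ∈ powersetCard k univ, walsh A B = ∑ B ∈ powersetCard k univ, walsh A' B := by
  have sum_eq_coeff (A : Finset ι) := coeff_sub_pow_mul_add_pow A 1 1 k
  simp only [one_pow, mul_one] at sum_eq_coeff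
  rw [← sum_eq_coeff, ← sum_eq_coeff, h]

lemma norm_coeff_le_of_norm_eval_le {P : ℂ[X]} {M : ℝ} (hP : ∀ z : ℂ, ‖z‖ = 1 → ‖P.eval z‖ ≤ M)
    (k : ℕ) : ‖P.coeff k‖ ≤ M := by
  have hM : 0 ≤ M := (norm_nonneg _).trans (hP 1 norm_one)
  refine le_of_sq_le_sq ?_ hM
  calc ‖P.coeff k‖ ^ 2 ≤ ∑ i ∈ P.support, ‖P.coeff i‖ ^ 2 := by
        by_cases hk : k ∈ P.support
        · exact single_le_sum (f := fun i => ‖P.coeff i‖ ^ 2) (fun i _ => sq_nonneg _) hk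
        · rw [notMem_support_iff.1 hk, norm_zero, zero_pow two_ne_zero]
          exact sum_nonneg fun i _ => sq_nonneg _
    _ = Real.circleAverage (fun z => ‖P.eval z‖ ^ 2) 0 1 := P.sum_sq_norm_coeff_eq_circleAverage
    _ ≤ M ^ 2 := by
        refine Real.circleAverage_mono_on_of_le_circle ?_ fun z hz => ?_
        · exact ContinuousOn.circleIntegrable' (by fun_prop)
        · gcongr
          exact hP z (by simpa using hz)

lemma norm_eval_sub_pow_mul_add_pow_le {x y : ℝ} (hx : 0 ≤ x) (hy : 0 ≤ y) (q a b : ℕ) {z : ℂ}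
    (hz : ‖z‖ = 1) :
    ‖(y - x * z) ^ (q + a) * (y + x * z) ^ (q + b)‖ ≤ (x ^ 2 + y ^ 2) ^ q * (x + y) ^ (a + b) := by
  have norm_x : ‖(x : ℂ) * z‖ = x := by rw [norm_mul, hz, mul_one, Complex.norm_of_nonneg hx]
  have norm_y : ‖(y : ℂ)‖ = y := Complex.norm_of_nonneg hy
  have hsub : ‖y - x * z‖ ≤ x + y := by linarith [norm_sub_le (y : ℂ) (x * z)]
  have hadd : ‖y + x * z‖ ≤ x + y := by linarith [norm_add_le (y : ℂ) (x * z)]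
  have hpair : ‖(y - x * z) * (y + x * z)‖ ≤ x ^ 2 + y ^ 2 := by
    calc ‖(y - x * z) * (y + x * z)‖ = ‖(y : ℂ) ^ 2 - (x * z) ^ 2‖ := by ring_nf
      _ ≤ ‖(y : ℂ) ^ 2‖ + ‖(x * z) ^ 2‖ := norm_sub_le _ _
      _ = x ^ 2 + y ^ 2 := by rw [norm_pow, norm_pow, norm_x, norm_y, add_comm]
  calc ‖(y - x * z) ^ (q + a) * (y + x * z) ^ (q + b)‖
      = ‖(y - x * z) * (y + x * z)‖ ^ q * (‖y - x * z‖ ^ a * ‖y + x * z‖ ^ b) := by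
        simp only [norm_mul, norm_pow]
        ring
    _ ≤ (x ^ 2 + y ^ 2) ^ q * ((x + y) ^ a * (x + y) ^ b) := by gcongr
    _ = (x ^ 2 + y ^ 2) ^ q * (x + y) ^ (a + b) := by rw [pow_add]

lemma abs_sum_walsh_mul_pow_mul_pow_le {A : Finset ι} {q : ℕ} (hA : q ≤ #A)
    (hAc : #A + q ≤ Fintype.card ι) {x y : ℝ} (hx : 0 ≤ x) (hy : 0 ≤ y) (k : ℕ) :
    |∑ B ∈ powersetCard k univ, walsh A B| * (x ^ k * y ^ (Fintype.card ι - k)) ≤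
      (x ^ 2 + y ^ 2) ^ q * (x + y) ^ (Fintype.card ι - 2 * q) := by
  obtain ⟨a, ha⟩ := Nat.exists_eq_add_of_le hA
  obtain ⟨b, hb⟩ : ∃ b, Fintype.card ι - #A = q + b := Nat.exists_eq_add_of_le (by omega)
  have hab : Fintype.card ι - 2 * q = a + b := by omega
  have weight_nonneg : 0 ≤ x ^ k * y ^ (Fintype.card ι - k) := by positivity
  rw [← abs_of_nonneg weight_nonneg, ← abs_mul, ← coeff_sub_pow_mul_add_pow, hb, ha, hab,
    ← Real.norm_eq_abs, ← Complex.norm_real, ← Complex.ofRealHom_eq_coe, ← coeff_map]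
  refine norm_coeff_le_of_norm_eval_le (fun z hz => ?_) k
  simpa using norm_eval_sub_pow_mul_add_pow_le hx hy q a b hz

end GeneratingFunction

/-! ### Elementary estimates -/

lemma choose_mul_pow_mul_pow_le (a b : ℕ) {j : ℕ} (hj : j ≤ a + b) :
    (a + b).choose j * (a ^ j * b ^ (a + b - j)) ≤ (a + b).choose a * (a ^ a * b ^ b) := by
  let T (i : ℕ) : ℕ := (a + b).choose i * (a ^ i * b ^ (a + b - i))
  have ratio {i : ℕ} (hi : i < a + b) : (i + 1) * b * T (i + 1) = (a + b - i) * a * T i := by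
    obtain ⟨l, hl⟩ : ∃ l, a + b - i = l + 1 := ⟨a + b - i - 1, by omega⟩
    have hl' : a + b - (i + 1) = l := by omega
    have hchoose := Nat.choose_succ_right_eq (a + b) i
    simp only [T, hl, hl'] at hchoose ⊢
    linear_combination a ^ (i + 1) * b ^ (l + 1) * hchoose
  suffices T j ≤ T a by simpa only [T, Nat.add_sub_cancel_left] using this
  obtain h | h := le_total j a
  · refine Nat.decreasingInduction' (P := fun i => T i ≤ T a) (fun i hia _ ih => ?_) h le_rfl
    have hpos : 0 < (a + b - i) * a := Nat.mul_pos (by omega) (by omega)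
    have increasing : T i ≤ T (i + 1) := by
      refine le_of_mul_le_mul_left ?_ hpos
      rw [← ratio (by omega), mul_comm (a + b - i) a]
      gcongr <;> omega
    exact increasing.trans ih
  · induction j, h using Nat.le_induction with
    | base => exact le_rfl
    | succ i hai ih =>
      have hpos : 0 < (i + 1) * b := Nat.mul_pos i.succ_pos (by omega)
      have decreasing : T (i + 1) ≤ T i := by
        refine le_of_mul_le_mul_left ?_ hpos
        rw [ratio (by omega), mul_comm (a + b - i) a]
        gcongr <;> omega
      exact decreasing.trans (ih (by omega))

lemma add_pow_add_le_mul_choose (a b : ℕ) :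
    (a + b) ^ (a + b) ≤ (a + b + 1) * ((a + b).choose a * (a ^ a * b ^ b)) := by
  rw [add_pow]
  calc ∑ j ∈ range (a + b + 1), a ^ j * b ^ (a + b - j) * (a + b).choose j
      ≤ ∑ _j ∈ range (a + b + 1), (a + b).choose a * (a ^ a * b ^ b) := by
        refine sum_le_sum fun j hj => ?_
        rw [mul_comm]
        exact choose_mul_pow_mul_pow_le a b (mem_range_succ_iff.1 hj)
    _ = (a + b + 1) * ((a + b).choose a * (a ^ a * b ^ b)) := by simp

lemma sq_add_sq_le_exp_mul_add_sq {x y : ℝ} (hx : 0 ≤ x) (hy : 0 ≤ y) :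
    x ^ 2 + y ^ 2 ≤ Real.exp (-(2 * x * y / (x + y) ^ 2)) * (x + y) ^ 2 := by
  have hcancel : 2 * x * y / (x + y) ^ 2 * (x + y) ^ 2 = 2 * x * y :=
    div_mul_cancel_of_imp fun h => by nlinarith
  calc x ^ 2 + y ^ 2 = (-(2 * x * y / (x + y) ^ 2) + 1) * (x + y) ^ 2 := by
        linear_combination hcancel
    _ ≤ Real.exp (-(2 * x * y / (x + y) ^ 2)) * (x + y) ^ 2 := by
        gcongr
        exact Real.add_one_le_exp _

lemma min_div_four_le_mul_div {x y : ℝ} (hx : 0 ≤ x) (hy : 0 ≤ y) (hxy : 0 < x + y) :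
    min x y / 4 ≤ x * y / (2 * (x + y)) := by
  have half_le_max : (x + y) / 2 ≤ max x y := by linarith [le_max_left x y, le_max_right x y]
  have hmin : 0 ≤ min x y := le_min hx hy
  rw [le_div_iff₀ (by positivity), ← min_mul_max x y]
  nlinarith

/-! ### Kravchuk polynomials -/

lemma choose_mul_krav {n : ℕ} (A : Finset (Fin n)) (k : ℕ) :
    n.choose k * krav n #A k = ∑ B ∈ powersetCard k univ, walsh A B := by
  have double_sum : ∑ A' ∈ powersetCard #A (univ : Finset (Fin n)),
      ∑ B ∈ powersetCard k univ, (-1 : ℝ) ^ #(A' ∩ B) =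
        n.choose #A * ∑ B ∈ powersetCard k univ, walsh A B := by
    have hconst := sum_eq_card_nsmul fun A' (hA' : A' ∈ powersetCard #A (univ : Finset (Fin n))) =>
      sum_walsh_congr (mem_powersetCard.1 hA').2 k
    simpa [walsh] using hconst
  have choose_card_ne_zero : (n.choose #A : ℝ) ≠ 0 :=
    Nat.cast_ne_zero.2 (Nat.choose_pos (by simpa using card_le_univ A)).ne'
  rw [krav, double_sum, mul_div_mul_left _ _ choose_card_ne_zero]
  refine mul_div_cancel_of_imp' fun hk => ?_
  rw [powersetCard_eq_empty.2 (by simpa [Nat.choose_eq_zero_iff] using hk), sum_empty]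

lemma sum_choose_mul_krav_mul (n : ℕ) (g : ℕ → ℝ) (A : Finset (Fin n)) :
    ∑ s ∈ range (n + 1), n.choose s * krav n #A s * g s = walshTransform (fun B => g #B) A := by
  simp_rw [walshTransform, choose_mul_krav, sum_mul]
  rw [← powerset_univ, sum_powerset, card_univ, Fintype.card_fin]
  refine sum_congr rfl fun s _ => sum_congr rfl fun B hB => ?_
  rw [(mem_powersetCard.1 hB).2, mul_comm]

lemma sum_choose_mul_sum_choose_mul_krav_mul_sq (n : ℕ) (g : ℕ → ℝ) :
    ∑ k ∈ range (n + 1), n.choose k * (∑ s ∈ range (n + 1), n.choose s * krav n k s * g s) ^ 2 =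
      2 ^ n * ∑ B : Finset (Fin n), g #B ^ 2 := by
  have by_level := sum_powerset_apply_card (x := (univ : Finset (Fin n)))
    fun k => (∑ s ∈ range (n + 1), n.choose s * krav n k s * g s) ^ 2
  simp_rw [sum_choose_mul_krav_mul, powerset_univ, sum_walshTransform_sq, card_univ,
    Fintype.card_fin, nsmul_eq_mul] at by_level
  exact by_level.symm

lemma abs_krav_le_mul_exp {k l a q : ℕ} (hqa : q ≤ a) (haq : a + q ≤ k + l) :
    |krav (k + l) a k| ≤ (k + l + 1) * Real.exp (-(q * (2 * k * l / (k + l) ^ 2))) := by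
  set decay := Real.exp (-(2 * k * l / (k + l) ^ 2 : ℝ)) with hdecay
  obtain ⟨A, -, rfl⟩ : ∃ A ⊆ (univ : Finset (Fin (k + l))), #A = a :=
    exists_subset_card_eq (by rw [card_univ, Fintype.card_fin]; omega)
  have hmode : (k + l : ℝ) ^ (k + l) ≤ (k + l + 1) * ((k + l).choose k * (k ^ k * l ^ l)) := by
    exact_mod_cast add_pow_add_le_mul_choose k l
  have hcoeff : |(k + l).choose k * krav (k + l) #A k| * ((k : ℝ) ^ k * (l : ℝ) ^ l) ≤
      decay ^ q * (k + l : ℝ) ^ (k + l) := by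
    calc |(k + l).choose k * krav (k + l) #A k| * ((k : ℝ) ^ k * (l : ℝ) ^ l)
        ≤ ((k : ℝ) ^ 2 + (l : ℝ) ^ 2) ^ q * (k + l : ℝ) ^ (k + l - 2 * q) := by
          rw [choose_mul_krav]
          simpa using abs_sum_walsh_mul_pow_mul_pow_le hqa (by simpa using haq)
            k.cast_nonneg l.cast_nonneg k
      _ ≤ (decay * (k + l : ℝ) ^ 2) ^ q * (k + l : ℝ) ^ (k + l - 2 * q) := by
          gcongr
          exact sq_add_sq_le_exp_mul_add_sq k.cast_nonneg l.cast_nonneg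
      _ = decay ^ q * (k + l : ℝ) ^ (k + l) := by
          rw [mul_pow, ← pow_mul, mul_assoc, ← pow_add, Nat.add_sub_cancel' (by omega)]
  have hpos : (0 : ℝ) < (k + l).choose k * (k ^ k * l ^ l) := by
    exact_mod_cast Nat.mul_pos (Nat.choose_pos (Nat.le_add_right k l))
      (Nat.mul_pos Nat.pow_self_pos Nat.pow_self_pos)
  refine le_of_mul_le_mul_right ?_ hpos
  calc |krav (k + l) #A k| * ((k + l).choose k * (k ^ k * l ^ l))
      = |(k + l).choose k * krav (k + l) #A k| * ((k : ℝ) ^ k * (l : ℝ) ^ l) := by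
        rw [abs_mul, Nat.abs_cast]
        ring
    _ ≤ decay ^ q * ((k + l + 1) * ((k + l).choose k * (k ^ k * l ^ l))) := by
        refine hcoeff.trans ?_
        gcongr
    _ = (k + l + 1) * Real.exp (-(q * (2 * k * l / (k + l) ^ 2))) *
          ((k + l).choose k * (k ^ k * l ^ l)) := by
        rw [hdecay, ← Real.exp_nat_mul, mul_neg]
        ring

lemma abs_krav_le_of_middle_quarters {k l a : ℕ} (ha : k + l ≤ 4 * a) (ha' : 4 * a ≤ 3 * (k + l)) :
    |krav (k + l) a k| ≤ (k + l + 1) * Real.exp (-(k * l / (2 * (k + l)))) := by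
  obtain ⟨q, hnq, hqa, haq⟩ : ∃ q, k + l ≤ 4 * q ∧ q ≤ a ∧ a + q ≤ k + l :=
    ⟨(k + l + 3) / 4, by omega, by omega, by omega⟩
  have hnq' : (k + l : ℝ) / 4 ≤ q := by
    rw [div_le_iff₀' (by norm_num)]
    exact_mod_cast hnq
  refine (abs_krav_le_mul_exp hqa haq).trans ?_
  gcongr
  calc (k * l / (2 * (k + l)) : ℝ) = (k + l) / 4 * (2 * k * l / (k + l) ^ 2) := by
        field_simp
        norm_num
    _ ≤ q * (2 * k * l / (k + l) ^ 2) := by gcongr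

lemma abs_krav_le_div_of_log_le {k l a : ℕ} {ε : ℝ} (hn : 0 < k + l) (ha : k + l ≤ 4 * a)
    (ha' : 4 * a ≤ 3 * (k + l)) (hε : ε ∈ Set.Ioo 0 1)
    (hk : 12 * Real.log ((k + l) / ε) ≤ k) (hl : 12 * Real.log ((k + l) / ε) ≤ l) :
    |krav (k + l) a k| ≤ ε / (k + l) := by
  obtain ⟨hε0, hε1⟩ := hε
  have two_le : (2 : ℝ) ≤ k + l := by exact_mod_cast (by omega : 2 ≤ k + l)
  have hexponent : 3 * Real.log ((k + l) / ε) ≤ k * l / (2 * (k + l)) := by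
    linarith [min_div_four_le_mul_div k.cast_nonneg l.cast_nonneg (by linarith : (0 : ℝ) < k + l),
      le_min hk hl]
  have hexp : Real.exp (-(3 * Real.log ((k + l) / ε))) = (ε / (k + l)) ^ 3 := by
    rw [← mul_neg, ← Real.log_inv, inv_div, ← Nat.cast_ofNat, Real.exp_nat_mul,
      Real.exp_log (by positivity)]
  -- One factor `ε / (k + l)` is the claimed bound, the other two absorb the prefactor `k + l + 1`.
  calc |krav (k + l) a k| ≤ (k + l + 1) * Real.exp (-(k * l / (2 * (k + l)))) :=
        abs_krav_le_of_middle_quarters ha ha'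
    _ ≤ (k + l + 1) * (ε / (k + l)) ^ 3 := by
        rw [← hexp]
        gcongr
    _ = (k + l + 1) * ε ^ 2 / (k + l) ^ 2 * (ε / (k + l)) := by
        field_simp
    _ ≤ 1 * (ε / (k + l)) := by
        gcongr
        rw [div_le_one (by positivity)]
        nlinarith [pow_le_one₀ (n := 2) hε0.le hε1.le]
    _ = ε / (k + l) := one_mul _

/-! ### The spectrum of a Hamming ball -/

/-- The total squared Fourier weight of `f_v` on the characters of degree `k`, which does not depend
on `v`; it is written in the Kravchuk form in which it occurs in `R_k`. -/
noncomputable def fourierWeight (d t k : ℕ) : ℝ :=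
  d.choose k * ((1 / 2 ^ d) * ∑ s ∈ Icc t d, d.choose s * krav d k s) ^ 2

lemma fourierWeight_nonneg (d t k : ℕ) : 0 ≤ fourierWeight d t k := by
  unfold fourierWeight
  positivity

lemma dotB_eq_two_mul_card_sub {d : ℕ} (v x : Fin d → Bool) :
    dotB v x = 2 * #{i | v i = x i} - d := by
  have sgnB_mul_sgnB (i) : sgnB (v i) * sgnB (x i) = 2 * (if v i = x i then 1 else 0) - 1 := by
    cases v i <;> cases x i <;> rfl
  simp_rw [dotB, sgnB_mul_sgnB, sum_sub_distrib, ← mul_sum, sum_boole]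
  simp

lemma fv_eq_ite_card {d : ℕ} (t : ℕ) (v x : Fin d → Bool) :
    fv t v x = if t ≤ #{i | v i = x i} then 1 else 0 := by
  rw [fv, dotB_eq_two_mul_card_sub]
  congr 1
  simp only [eq_iff_iff]
  omega

lemma bijective_filter_eq {ι : Type*} [Fintype ι] (v : ι → Bool) :
    Function.Bijective fun x : ι → Bool => ({i | v i = x i} : Finset ι) := by
  classical
  refine (Fintype.bijective_iff_injective_and_card _).2 ⟨fun x y hxy => funext fun i => ?_, by simp⟩
  have hi : v i = x i ↔ v i = y i := by simpa using Finset.ext_iff.1 hxy i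
  revert hi
  cases v i <;> cases x i <;> cases y i <;> decide

lemma Efv_eq_sum_ite_div (d t : ℕ) (v : Fin d → Bool) :
    Efv d t v = (∑ B : Finset (Fin d), if t ≤ #B then (1 : ℝ) else 0) / 2 ^ d := by
  rw [Efv]
  congr 1
  exact Fintype.sum_bijective _ (bijective_filter_eq v) _ _ (fv_eq_ite_card t v)

lemma sum_fourierWeight (d t : ℕ) (v : Fin d → Bool) :
    ∑ k ∈ range (d + 1), fourierWeight d t k = Efv d t v := by
  let g (s : ℕ) : ℝ := if t ≤ s then 1 else 0
  have g_sq (s : ℕ) : g s ^ 2 = g s := by simp only [g, ite_pow, one_pow, zero_pow two_ne_zero]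
  have sum_Icc_eq (k : ℕ) : ∑ s ∈ Icc t d, d.choose s * krav d k s =
      ∑ s ∈ range (d + 1), d.choose s * krav d k s * g s := by
    simp only [g, mul_ite, mul_one, mul_zero, ← sum_filter]
    congr 1
    ext s
    simp only [mem_Icc, mem_filter, mem_range]
    omega
  calc ∑ k ∈ range (d + 1), fourierWeight d t k
      = (1 / 2 ^ d) ^ 2 * ∑ k ∈ range (d + 1), d.choose k *
          (∑ s ∈ range (d + 1), d.choose s * krav d k s * g s) ^ 2 := by
        rw [mul_sum]
        refine sum_congr rfl fun k _ => ?_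
        rw [fourierWeight, sum_Icc_eq]
        ring
    _ = (1 / 2 ^ d) ^ 2 * (2 ^ d * ∑ B : Finset (Fin d), g #B) := by
        simp_rw [sum_choose_mul_sum_choose_mul_krav_mul_sq, g_sq]
    _ = Efv d t v := by
        rw [Efv_eq_sum_ite_div]
        field_simp
        rfl

lemma sum_Rk_le {d m : ℕ} {S : Finset ℕ} {δ : ℝ} (hS : S ⊆ range (d + 1)) (hδ : 0 ≤ δ)
    (hkrav : ∀ k ∈ S, krav d m k ≤ δ) (t : ℕ) (v : Fin d → Bool) :
    ∑ k ∈ S, Rk d t m k ≤ Efv d t v * δ := by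
  calc ∑ k ∈ S, Rk d t m k ≤ ∑ k ∈ S, fourierWeight d t k * δ :=
        sum_le_sum fun k hk =>
          mul_le_mul_of_nonneg_left (hkrav k hk) (fourierWeight_nonneg d t k)
    _ ≤ Efv d t v * δ := by
        rw [← sum_mul, ← sum_fourierWeight]
        gcongr
        exact fun k _ _ => fourierWeight_nonneg d t k

lemma Efv_zero_notMem_Ioo (t : ℕ) (v : Fin 0 → Bool) : Efv 0 t v ∉ Set.Ioo 0 1 := by
  rw [Efv_eq_sum_ite_div, Fintype.sum_unique]
  split_ifs <;> simp

theorem stmt_17 :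
    ∃ c > (0 : ℝ), ∀ (d t : ℕ) (v u : Fin d → Bool) (ε : ℝ) (m : ℕ),
      m = (Finset.univ.filter fun i => v i = u i).card →
      |(d : ℝ) / 2 - m| ≤ (d : ℝ) / 4 →
      ε ∈ Set.Ioo (0 : ℝ) 1 → Efv d t v = ε →
      ∑ k ∈ Finset.Icc ⌈c * Real.log (d / ε)⌉₊ (d - ⌈c * Real.log (d / ε)⌉₊),
          Rk d t m k ≤ ε ^ 2 / d := by
  refine ⟨12, by norm_num, fun d t v u ε m _ hm hε hE => ?_⟩
  have d_pos : 0 < d := Nat.pos_of_ne_zero fun hd => by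
    subst hd
    exact Efv_zero_notMem_Ioo t v (hE ▸ hε)
  obtain ⟨hm_lower, hm_upper⟩ : d ≤ 4 * m ∧ 4 * m ≤ 3 * d := by
    rw [abs_le] at hm
    constructor <;> rify <;> linarith
  rw [show ε ^ 2 / d = Efv d t v * (ε / d) by rw [hE]; ring]
  set L := ⌈12 * Real.log (d / ε)⌉₊ with hL
  refine sum_Rk_le (fun k hk => ?_) (div_nonneg hε.1.le d.cast_nonneg) (fun k hk => ?_) t v
  · rw [mem_Icc] at hk
    rw [mem_range]
    omega
  · obtain ⟨hLk, hkL⟩ := mem_Icc.1 hk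
    obtain ⟨l, rfl⟩ : ∃ l, d = k + l := Nat.exists_eq_add_of_le (by omega)
    have hLl : L ≤ l := by omega
    rw [hL, Nat.ceil_le] at hLk hLl
    push_cast at hLk hLl ⊢
    exact (le_abs_self _).trans (abs_krav_le_div_of_log_le d_pos hm_lower hm_upper hε hLk hLl)
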